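/- arXiv:1109.1907 — 2 statements merged into one kernel-verified Lean document; each statement's English description precedes it below -/
import Mathlib

section
/- Let T : [0,L] → ℝ³ be continuous with ‖T(s)‖ = 1 for all s. In the Hilbert space H = L²(0,L;ℝ³), let V₀ = {g ∈ H : ∫₀ᴸ g = 0}, let D_I = {g ∈ V₀ : g(s)·T(s) = 0 for a.e. s}, and let D_E be the orthogonal complement of D_I inside V₀ (i.e. D_E = V₀ ∩ D_I^⊥). Then there exists a constant C > 0 (depending only on T and L) such that for every g ∈ D_E, ‖g‖_{L²(0,L;ℝ³)} ≤ C ‖g·T‖_{L²(0,L)}. In particular g ↦ ‖g·T‖_{L²} is a norm on D_E equivalent to the L² norm. -/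
/-!
The map `g ↦ g·T` is a bounded operator on `H` with closed range (it is even onto `L²(0,L)`), and
`V₀` is a closed subspace of finite codimension, so the restriction of this operator to `V₀` still
has closed range. Its kernel is `D_I`. By the open mapping theorem, a bounded operator with closed
range is bounded below on the orthogonal complement of its kernel, which here is `D_E`.
-/

open MeasureTheory Set Filter Metric intervalIntegral
open scoped Topology ENNReal RealInnerProductSpace

noncomputable section

section ClosedRange

variable {𝕜 H G : Type*} [RCLike 𝕜]
  [NormedAddCommGroup H] [CompleteSpace H]
  [NormedAddCommGroup G] [NormedSpace 𝕜 G] [CompleteSpace G]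

theorem isStrictMap_of_isClosed_range [NormedSpace 𝕜 H] (A : H →L[𝕜] G)
    (hA : IsClosed (A.range : Set G)) : Topology.IsStrictMap A :=
  have : CompleteSpace A.range := hA.completeSpace_coe
  A.rangeRestrict.isQuotientMap A.toLinearMap.surjective_rangeRestrict

variable [InnerProductSpace 𝕜 H]

theorem exists_norm_le_mul_norm_of_mem_orthogonal_ker (A : H →L[𝕜] G)
    (hA : IsClosed (A.range : Set G)) :
    ∃ C > (0 : ℝ), ∀ g ∈ A.kerᗮ, ‖g‖ ≤ C * ‖A g‖ := by
  have : CompleteSpace A.range := hA.completeSpace_coe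
  obtain ⟨C, hC, hpre⟩ :=
    A.rangeRestrict.exists_preimage_norm_le A.toLinearMap.surjective_rangeRestrict
  refine ⟨C, hC, fun g hg => ?_⟩
  obtain ⟨x, hx, hxC⟩ := hpre (A.rangeRestrict g)
  have hker : x - g ∈ A.ker := by
    simpa [sub_eq_zero] using congrArg Subtype.val hx
  -- Pythagoras: among all preimages of `A g`, the one orthogonal to `ker A` is the shortest.
  have hg_le : ‖g‖ ≤ ‖x‖ := by
    have hpyth := norm_add_sq_eq_norm_sq_add_norm_sq_of_inner_eq_zero g (x - g)
      (Submodule.inner_left_of_mem_orthogonal hker hg)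
    rw [add_sub_cancel] at hpyth
    exact nonneg_le_nonneg_of_sq_le_sq (norm_nonneg x) (by linarith [mul_self_nonneg ‖x - g‖])
  exact hg_le.trans hxC

theorem exists_norm_le_mul_norm_of_orthogonal_inf_ker {V : Submodule 𝕜 H}
    (hV : IsClosed (V : Set H)) [V.CoFG] (A : H →L[𝕜] G) (hA : IsClosed (A.range : Set G)) :
    ∃ C > (0 : ℝ), ∀ g ∈ V, (∀ h ∈ V, A h = 0 → inner 𝕜 g h = 0) → ‖g‖ ≤ C * ‖A g‖ := by
  have : CompleteSpace V := hV.completeSpace_coe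
  have hAV : IsClosed ((A.domRestrict V).range : Set G) :=
    ((A.isStrictMap_isClosed_range_iff_restrict V hV).mp
      ⟨isStrictMap_of_isClosed_range A hA, hA⟩).2
  obtain ⟨C, hC, hbound⟩ := exists_norm_le_mul_norm_of_mem_orthogonal_ker (A.domRestrict V) hAV
  exact ⟨C, hC, fun g hg horth => hbound ⟨g, hg⟩ <|
    (Submodule.mem_orthogonal' _ _).mpr fun h hh => horth h h.2 hh⟩

end ClosedRange

variable {α F : Type*} [MeasurableSpace α] {μ : Measure α} [NormedAddCommGroup F]

section InnerLp

variable [InnerProductSpace ℝ F] {T : α → F} {p : ℝ≥0∞} [Fact (1 ≤ p)]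

variable (p) in
/-- The pointwise inner product `g ↦ g·T` with a bounded field `T`, as an operator on `Lᵖ`
fields. -/
def innerLp (hT : MemLp T ∞ μ) : Lp F p μ →L[ℝ] Lp ℝ p μ :=
  ((innerSL ℝ).holderL μ p ∞ p).flip (hT.toLp T)

theorem coeFn_innerLp (hT : MemLp T ∞ μ) (g : Lp F p μ) :
    innerLp p hT g =ᵐ[μ] fun s => ⟪g s, T s⟫ := by
  filter_upwards [(innerSL ℝ).coeFn_holder (r := p) g (hT.toLp T), hT.coeFn_toLp] with s hs hTs
  rw [← hTs]
  exact hs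

theorem innerLp_eq_zero_iff (hT : MemLp T ∞ μ) (g : Lp F p μ) :
    innerLp p hT g = 0 ↔ ∀ᵐ s ∂μ, ⟪g s, T s⟫ = 0 := by
  rw [Lp.eq_zero_iff_ae_eq_zero]
  refine eventually_congr ?_
  filter_upwards [coeFn_innerLp hT g] with s hs
  rw [hs, Pi.zero_apply]

theorem innerLp_surjective (hT : MemLp T ∞ μ) {c : ℝ} (hc : 0 < c)
    (hTc : ∀ᵐ s ∂μ, c ≤ ‖T s‖) : Function.Surjective (innerLp p hT) := by
  intro φ
  have hmem : MemLp (fun s => (φ s / ‖T s‖ ^ 2) • T s) p μ := by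
    have hφ := Lp.memLp φ
    refine hφ.of_le_mul (c := c⁻¹) ((hφ.1.div₀ (hT.1.norm.pow 2)).smul hT.1) ?_
    filter_upwards [hTc] with s hs
    have hpos : 0 < ‖T s‖ := hc.trans_le hs
    calc ‖(φ s / ‖T s‖ ^ 2) • T s‖ = ‖T s‖⁻¹ * ‖φ s‖ := by
          rw [norm_smul, norm_div, norm_pow, norm_norm]
          field_simp
      _ ≤ c⁻¹ * ‖φ s‖ := by gcongr
  refine ⟨hmem.toLp _, Lp.ext ?_⟩
  filter_upwards [coeFn_innerLp hT (hmem.toLp _), hmem.coeFn_toLp, hTc] with s hinner hs hTs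
  have hne : ‖T s‖ ≠ 0 := (hc.trans_le hTs).ne'
  rw [hinner, hs, real_inner_smul_left, real_inner_self_eq_norm_sq]
  field_simp

theorem norm_innerLp (hT : MemLp T ∞ μ) (g : Lp F 2 μ) :
    ‖innerLp 2 hT g‖ = √(∫ s, ⟪g s, T s⟫ ^ 2 ∂μ) := by
  rw [norm_eq_sqrt_real_inner, L2.inner_def]
  congr 1
  refine integral_congr_ae ?_
  filter_upwards [coeFn_innerLp hT g] with s hs
  rw [hs, real_inner_self_eq_norm_sq, Real.norm_eq_abs, sq_abs]

end InnerLp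

section IntegralL2

variable [IsFiniteMeasure μ] [NormedSpace ℝ F] [CompleteSpace F]

variable (μ F) in
/-- Integration of `L²` fields against a finite measure, as a bounded operator: the pairing with
the constant function `1`. -/
def integralL2 : Lp F 2 μ →L[ℝ] F :=
  (ContinuousLinearMap.lsmul ℝ ℝ).lpPairing μ 2 2 (Lp.const 2 μ 1)

theorem integralL2_apply (g : Lp F 2 μ) : integralL2 F μ g = ∫ s, g s ∂μ := by
  rw [integralL2, ContinuousLinearMap.lpPairing_eq_integral]
  refine integral_congr_ae ?_
  filter_upwards [Lp.coeFn_const 2 μ (1 : ℝ)] with s hs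
  rw [hs, Function.const_apply, ContinuousLinearMap.lsmul_apply, one_smul]

end IntegralL2

theorem extensional_norm_equivalence_general [IsFiniteMeasure μ] [InnerProductSpace ℝ F]
    [FiniteDimensional ℝ F] {T : α → F} (hT : MemLp T ∞ μ) {c : ℝ} (hc : 0 < c)
    (hTc : ∀ᵐ s ∂μ, c ≤ ‖T s‖) :
    ∃ C > (0 : ℝ), ∀ g : Lp F 2 μ, ∫ s, g s ∂μ = 0 →
      (∀ h : Lp F 2 μ, ∫ s, h s ∂μ = 0 → (∀ᵐ s ∂μ, ⟪h s, T s⟫ = 0) → ⟪g, h⟫ = 0) →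
      ‖g‖ ≤ C * √(∫ s, ⟪g s, T s⟫ ^ 2 ∂μ) := by
  have : CompleteSpace F := FiniteDimensional.complete ℝ F
  have : (integralL2 F μ).ker.CoFG := .ker _
  have hrange : IsClosed ((innerLp 2 hT).range : Set (Lp ℝ 2 μ)) := by
    rw [LinearMap.range_eq_top.mpr (innerLp_surjective hT hc hTc)]
    exact isClosed_univ
  simp only [← integralL2_apply, ← innerLp_eq_zero_iff hT, ← norm_innerLp hT]
  exact exists_norm_le_mul_norm_of_orthogonal_inf_ker (integralL2 F μ).isClosed_ker
    (innerLp 2 hT) hrange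

/-- Let `T : [0,L] → ℝ³` be continuous with `‖T(s)‖ = 1`.  In
`H = L²(0,L;ℝ³)` let `V₀` be the mean-zero elements, `D_I = {g ∈ V₀ : g·T = 0 a.e.}` and
`D_E = V₀ ∩ D_I^⊥`.  Then there is `C > 0` (depending only on `T` and `L`) with
`‖g‖_{L²} ≤ C ‖g·T‖_{L²}` for every `g ∈ D_E`; in particular `g ↦ ‖g·T‖_{L²}` is a norm on
`D_E` equivalent to the `L²` norm. -/
theorem extensional_norm_equivalence
    (L : ℝ) (hL : 0 < L)
    (T : ℝ → EuclideanSpace ℝ (Fin 3))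
    (hTcont : ContinuousOn T (Icc 0 L))
    (hT1 : ∀ s ∈ Icc 0 L, ‖T s‖ = 1) :
    ∃ C > (0 : ℝ),
      ∀ g : Lp (EuclideanSpace ℝ (Fin 3)) 2 (volume.restrict (Ioo 0 L)),
        (∫ s, g s ∂(volume.restrict (Ioo 0 L))) = 0 →
        (∀ h : Lp (EuclideanSpace ℝ (Fin 3)) 2 (volume.restrict (Ioo 0 L)),
          (∫ s, h s ∂(volume.restrict (Ioo 0 L))) = 0 →
          (∀ᵐ s ∂(volume.restrict (Ioo 0 L)), ⟪h s, T s⟫ = 0) →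
          ⟪g, h⟫ = 0) →
        ‖g‖ ≤ C * Real.sqrt (∫ s, ⟪g s, T s⟫ ^ 2 ∂(volume.restrict (Ioo 0 L))) := by
  have hT : AEStronglyMeasurable T (volume.restrict (Ioo 0 L)) :=
    (hTcont.mono Ioo_subset_Icc_self).aestronglyMeasurable measurableSet_Ioo
  have hT1' : ∀ᵐ s ∂(volume.restrict (Ioo 0 L)), ‖T s‖ = 1 :=
    (ae_restrict_mem measurableSet_Ioo).mono fun s hs => hT1 s (Ioo_subset_Icc_self hs)
  exact extensional_norm_equivalence_general
    (memLp_top_of_bound hT 1 (hT1'.mono fun _ h => h.le)) one_pos (hT1'.mono fun _ h => h.ge)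
end
end

section
/- Let T : [0,L] → ℝ³ be continuous with ‖T(s)‖ = 1 for all s. In H = L²(0,L;ℝ³), let V₀ = {g ∈ H : ∫₀ᴸ g = 0}, D_I = {g ∈ V₀ : g·T = 0 a.e.}, and D_E = V₀ ∩ D_I^⊥. Then the set { g − (g·T)T : g ∈ D_E } (the normal parts of extensional derivatives) is contained in a linear subspace of L²(0,L;ℝ³) of dimension at most 3. -/
/-!
In `L²` let `C` be the constant fields and `N` the fields with values in `K x = (𝕜 ∙ T x)ᗮ`. Mean
zero means orthogonality to `C`, so `D_I = Cᗮ ⊓ N`. Since `C` is finite-dimensional and `N` closed,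
`C ⊔ Nᗮ` is closed and therefore equals `D_Iᗮ`. The projection onto `N`, which is taken pointwise,
annihilates `Nᗮ`; hence the normal part of a field in `D_Iᗮ` is the normal part of a constant field.
-/

open MeasureTheory Set Filter Metric intervalIntegral
open scoped Topology ENNReal RealInnerProductSpace

noncomputable section

section General

open Submodule Module
open scoped InnerProductSpace

variable {α 𝕜 E : Type*} [RCLike 𝕜] [NormedAddCommGroup E] [InnerProductSpace 𝕜 E]

lemma orthogonal_inf_orthogonal_eq_sup [CompleteSpace E] (C N : Submodule 𝕜 E)
    [FiniteDimensional 𝕜 C] [N.HasOrthogonalProjection] : (Cᗮ ⊓ N)ᗮ = C ⊔ Nᗮ := by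
  have hclosed : IsClosed ((C ⊔ Nᗮ : Submodule 𝕜 E) : Set E) := by
    rw [sup_comm]
    exact isClosed_sup_finiteDimensional _ _ N.isClosed_orthogonal
  calc (Cᗮ ⊓ N)ᗮ = (C ⊔ Nᗮ)ᗮᗮ := by rw [← inf_orthogonal, N.orthogonal_orthogonal]
    _ = C ⊔ Nᗮ := by
      rw [orthogonal_orthogonal_eq_closure, hclosed.submodule_topologicalClosure_eq]

lemma starProjection_orthogonal_unit_singleton {t : E} (ht : ‖t‖ = 1) (u : E) :
    (𝕜 ∙ t)ᗮ.starProjection u = u - ⟪t, u⟫_𝕜 • t := by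
  rw [starProjection_orthogonal_val, starProjection_unit_singleton 𝕜 ht]

variable [MeasurableSpace α] {μ : Measure α}

lemma aestronglyMeasurable_starProjection_orthogonal_singleton {T : α → E}
    (hT : AEStronglyMeasurable T μ) (hT1 : ∀ᵐ x ∂μ, ‖T x‖ = 1) :
    AEStronglyMeasurable (fun x => (𝕜 ∙ T x)ᗮ.starProjection) μ := by
  have hcont : Continuous fun t : E =>
      ContinuousLinearMap.id 𝕜 E - (innerSL 𝕜 t).smulRight t := by fun_prop
  refine (hcont.comp_aestronglyMeasurable hT).congr ?_
  filter_upwards [hT1] with x hx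
  ext u
  simp [starProjection_orthogonal_unit_singleton hx]

lemma mem_orthogonal_range_constL_iff [CompleteSpace E] [NormedSpace ℝ E] [IsFiniteMeasure μ]
    (f : Lp E 2 μ) :
    f ∈ (Lp.constL 2 μ 𝕜 : E →L[𝕜] Lp E 2 μ).rangeᗮ ↔ ∫ x, f x ∂μ = 0 := by
  have inner_const (c : E) : ⟪Lp.const 2 μ c, f⟫_𝕜 = ⟪c, ∫ x, f x ∂μ⟫_𝕜 := by
    rw [← indicatorConstLp_univ, L2.inner_indicatorConstLp_eq_inner_setIntegral, setIntegral_univ]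
  simpa [mem_orthogonal, inner_const] using
    (ext_iff_inner_left 𝕜 (x := ∫ x, f x ∂μ) (y := 0)).symm

/-- The `L²` sections of a field of subspaces `K`: the square-integrable functions whose value at
almost every `x` lies in `K x`. For `K x = (𝕜 ∙ T x)ᗮ` these are the `L²` fields normal to `T`. -/
def l2Sections (K : α → Submodule 𝕜 E) (μ : Measure α) : Submodule 𝕜 (Lp E 2 μ) where
  carrier := {f | ∀ᵐ x ∂μ, f x ∈ K x}
  zero_mem' := by
    change ∀ᵐ x ∂μ, (0 : Lp E 2 μ) x ∈ K x
    filter_upwards [Lp.coeFn_zero E 2 μ] with x hx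
    rw [hx]
    exact zero_mem _
  add_mem' {f g} hf hg := by
    change ∀ᵐ x ∂μ, (f + g) x ∈ K x
    filter_upwards [Lp.coeFn_add f g, hf, hg] with x hx hfx hgx
    rw [hx]
    exact add_mem hfx hgx
  smul_mem' c f hf := by
    change ∀ᵐ x ∂μ, (c • f) x ∈ K x
    filter_upwards [Lp.coeFn_smul c f, hf] with x hx hfx
    rw [hx]
    exact (K x).smul_mem c hfx

section Projection

variable {K : α → Submodule 𝕜 E} [∀ x, (K x).HasOrthogonalProjection]

lemma memLp_starProjection {p : ℝ≥0∞} {u : α → E}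
    (hK : AEStronglyMeasurable (fun x => (K x).starProjection) μ) (hu : MemLp u p μ) :
    MemLp (fun x => (K x).starProjection (u x)) p μ :=
  hu.mono ((ContinuousLinearMap.id 𝕜 (E →L[𝕜] E)).aestronglyMeasurable_comp₂ hK hu.1) <|
    .of_forall fun x => (K x).norm_starProjection_apply_le (u x)

lemma toLp_starProjection_mem_l2Sections {u : α → E}
    (hu : MemLp (fun x => (K x).starProjection (u x)) 2 μ) : hu.toLp _ ∈ l2Sections K μ := by
  change ∀ᵐ x ∂μ, hu.toLp _ x ∈ K x
  filter_upwards [hu.coeFn_toLp] with x hx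
  rw [hx]
  exact starProjection_apply_mem _ _

lemma sub_toLp_starProjection_mem_orthogonal_l2Sections {f : Lp E 2 μ}
    (hf : MemLp (fun x => (K x).starProjection (f x)) 2 μ) :
    f - hf.toLp _ ∈ (l2Sections K μ)ᗮ := by
  refine (mem_orthogonal' _ _).2 fun h hh => ?_
  rw [L2.inner_def]
  refine integral_eq_zero_of_ae ?_
  filter_upwards [Lp.coeFn_sub f (hf.toLp _), hf.coeFn_toLp, hh] with x hsub hproj hx
  rw [hsub, Pi.sub_apply, hproj]
  exact starProjection_inner_eq_zero _ _ hx

lemma hasOrthogonalProjection_l2Sections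
    (hK : AEStronglyMeasurable (fun x => (K x).starProjection) μ) :
    (l2Sections K μ).HasOrthogonalProjection where
  exists_orthogonal f :=
    ⟨_, toLp_starProjection_mem_l2Sections (memLp_starProjection hK (Lp.memLp f)),
      sub_toLp_starProjection_mem_orthogonal_l2Sections _⟩

lemma coeFn_starProjection_l2Sections [(l2Sections K μ).HasOrthogonalProjection]
    (hK : AEStronglyMeasurable (fun x => (K x).starProjection) μ) (f : Lp E 2 μ) :
    (l2Sections K μ).starProjection f =ᵐ[μ] fun x => (K x).starProjection (f x) := by
  have hf := memLp_starProjection hK (Lp.memLp f)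
  rw [eq_starProjection_of_mem_orthogonal (toLp_starProjection_mem_l2Sections hf)
    (sub_toLp_starProjection_mem_orthogonal_l2Sections hf)]
  exact hf.coeFn_toLp

end Projection

variable [FiniteDimensional 𝕜 E] [NormedSpace ℝ E] [IsFiniteMeasure μ]

lemma exists_starProjection_ae_eq_starProjection_const {K : α → Submodule 𝕜 E}
    (hK : AEStronglyMeasurable (fun x => (K x).starProjection) μ) {g : Lp E 2 μ}
    (hg : ∀ h : Lp E 2 μ, ∫ x, h x ∂μ = 0 → (∀ᵐ x ∂μ, h x ∈ K x) → ⟪g, h⟫_𝕜 = 0) :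
    ∃ c : E, ∀ᵐ x ∂μ, (K x).starProjection (g x) = (K x).starProjection c := by
  have : CompleteSpace E := FiniteDimensional.complete 𝕜 E
  have := hasOrthogonalProjection_l2Sections hK
  let C := (Lp.constL 2 μ 𝕜 : E →L[𝕜] Lp E 2 μ).range
  let N := l2Sections K μ
  have hg_mem : g ∈ C ⊔ Nᗮ := by
    rw [← orthogonal_inf_orthogonal_eq_sup, mem_orthogonal']
    exact fun h ⟨hC, hN⟩ => hg h ((mem_orthogonal_range_constL_iff h).1 hC) hN
  obtain ⟨u, ⟨c, rfl : Lp.const 2 μ c = u⟩, f, hf, rfl⟩ := mem_sup.1 hg_mem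
  have hproj : N.starProjection (Lp.const 2 μ c + f) = N.starProjection (Lp.const 2 μ c) := by
    rw [map_add, (starProjection_apply_eq_zero_iff N).2 hf, add_zero]
  refine ⟨c, ?_⟩
  filter_upwards [coeFn_starProjection_l2Sections hK (Lp.const 2 μ c + f),
    coeFn_starProjection_l2Sections hK (Lp.const 2 μ c), Lp.coeFn_const 2 μ c]
    with x hsum hconst hc
  rw [← hsum, hproj, hconst, hc, Function.const_apply]

theorem extensional_normal_parts_finite_dimensional_general {n : ℕ} (hn : finrank 𝕜 E = n)
    {T : α → E} (hT : AEStronglyMeasurable T μ) (hT1 : ∀ᵐ x ∂μ, ‖T x‖ = 1) :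
    ∃ v : Fin n → α → E, ∀ g : Lp E 2 μ,
      (∀ h : Lp E 2 μ, ∫ x, h x ∂μ = 0 → (∀ᵐ x ∂μ, ⟪T x, h x⟫_𝕜 = 0) → ⟪g, h⟫_𝕜 = 0) →
      ∃ a : Fin n → 𝕜, ∀ᵐ x ∂μ, g x - ⟪T x, g x⟫_𝕜 • T x = ∑ i, a i • v i x := by
  let b := finBasisOfFinrankEq 𝕜 E hn
  refine ⟨fun i x => (𝕜 ∙ T x)ᗮ.starProjection (b i), fun g hg => ?_⟩
  simp only [← mem_orthogonal_singleton_iff_inner_right (u := T _)] at hg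
  obtain ⟨c, hc⟩ := exists_starProjection_ae_eq_starProjection_const
    (aestronglyMeasurable_starProjection_orthogonal_singleton hT hT1) hg
  refine ⟨b.repr c, ?_⟩
  filter_upwards [hc, hT1] with x hx hTx
  calc g x - ⟪T x, g x⟫_𝕜 • T x = (𝕜 ∙ T x)ᗮ.starProjection c := by
        rw [← hx, starProjection_orthogonal_unit_singleton hTx]
    _ = (𝕜 ∙ T x)ᗮ.starProjection (∑ i, b.repr c i • b i) := by rw [b.sum_repr]
    _ = ∑ i, b.repr c i • (𝕜 ∙ T x)ᗮ.starProjection (b i) := by simp only [map_sum, map_smul]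

end General

/-- With `V₀`, `D_I`, `D_E` as in Lemma 4.3 of the paper (mean-zero `L²`
fields, those orthogonal a.e. to the unit field `T`, and the orthogonal complement of `D_I`
inside `V₀`), the set of normal parts `g − (g·T)T` of elements `g ∈ D_E` is contained in a
linear subspace of `L²(0,L;ℝ³)` of dimension at most `3`, i.e. it is contained in the span
of three fixed functions. -/
theorem extensional_normal_parts_finite_dimensional
    (L : ℝ) (hL : 0 < L)
    (T : ℝ → EuclideanSpace ℝ (Fin 3))
    (hTcont : ContinuousOn T (Icc 0 L))
    (hT1 : ∀ s ∈ Icc 0 L, ‖T s‖ = 1) :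
    ∃ v : Fin 3 → (ℝ → EuclideanSpace ℝ (Fin 3)),
      ∀ g : Lp (EuclideanSpace ℝ (Fin 3)) 2 (volume.restrict (Ioo 0 L)),
        (∫ s, g s ∂(volume.restrict (Ioo 0 L))) = 0 →
        (∀ h : Lp (EuclideanSpace ℝ (Fin 3)) 2 (volume.restrict (Ioo 0 L)),
          (∫ s, h s ∂(volume.restrict (Ioo 0 L))) = 0 →
          (∀ᵐ s ∂(volume.restrict (Ioo 0 L)), ⟪h s, T s⟫ = 0) →
          ⟪g, h⟫ = 0) →
        ∃ a : Fin 3 → ℝ,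
          ∀ᵐ s ∂(volume.restrict (Ioo 0 L)),
            g s - ⟪g s, T s⟫ • T s = a 0 • v 0 s + a 1 • v 1 s + a 2 • v 2 s := by
  have hTmeas : AEStronglyMeasurable T (volume.restrict (Ioo 0 L)) :=
    (hTcont.mono Ioo_subset_Icc_self).aestronglyMeasurable measurableSet_Ioo
  have hTunit : ∀ᵐ s ∂volume.restrict (Ioo 0 L), ‖T s‖ = 1 :=
    ae_restrict_of_forall_mem measurableSet_Ioo fun s hs => hT1 s (Ioo_subset_Icc_self hs)
  obtain ⟨v, hv⟩ := extensional_normal_parts_finite_dimensional_general (𝕜 := ℝ)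
    finrank_euclideanSpace_fin hTmeas hTunit
  simp only [Fin.sum_univ_three, real_inner_comm _ (T _)] at hv
  exact ⟨v, fun g _ => hv g⟩
end
end
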